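/- Let β > 0 and let m ≥ 1 be an integer. There exists K > 0 depending only on m and β such that for all integers n ≥ 1, |E[Σ_{i=1}^{n} binom(d(u_i), 2)] − ((2+5β)/(2β)·m² + (2−β)/(2β)·m)·n| ≤ K · n^{2/(2+β)}, where the expectation is over G^n_{m,β}. -/

import Mathlib

open Finset

/-- A parent sequence of length `N`: for each `t ∈ {2,…,N}` an index `f t ∈ {1,…,t-1}`. -/
def ParentSeq (N : ℕ) : Type :=
  ∀ t : Set.Icc 2 N, Set.Icc 1 ((t : ℕ) - 1)

noncomputable instance (N : ℕ) : Fintype (ParentSeq N) := by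
  unfold ParentSeq
  classical
  infer_instance

/-- The value of a parent sequence at `j` (junk value `0` outside `{2,…,N}`). -/
def pval {N : ℕ} (f : ParentSeq N) (j : ℕ) : ℕ :=
  if h : 2 ≤ j ∧ j ≤ N then (f ⟨j, Set.mem_Icc.mpr h⟩ : ℕ) else 0

/-- The degree `d_t(v_i)` of vertex `i` at time `t` in the tree determined by `f`. -/
def deg {N : ℕ} (f : ParentSeq N) (t i : ℕ) : ℕ :=
  ((Finset.Icc 2 t).filter (fun j => pval f j = i)).card + (if 2 ≤ i then 1 else 0)

/-- The Móri probability of the parent sequence `f`. -/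
noncomputable def moriP {N : ℕ} (β : ℝ) (f : ParentSeq N) : ℝ :=
  ∏ t ∈ Finset.Icc 2 N, ((deg f (t - 1) (pval f t) : ℝ) + β) / ((2 + β) * ((t : ℝ) - 1) - 2)

/-- Expectation of `X` under the Móri measure on parent sequences of length `N`. -/
noncomputable def moriE (N : ℕ) (β : ℝ) (X : ParentSeq N → ℝ) : ℝ :=
  ∑ f : ParentSeq N, moriP β f * X f

open Classical in
/-- Probability of an event under the Móri measure on parent sequences of length `N`. -/
noncomputable def moriPr (N : ℕ) (β : ℝ) (p : ParentSeq N → Prop) : ℝ :=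
  ∑ f : ParentSeq N, if p f then moriP β f else 0

/-- The index of the merged vertex containing tree vertex `t` when merging in blocks of `m`. -/
def blk (m t : ℕ) : ℕ := (t - 1) / m + 1

/-- The number `m(a,b)` of edges joining `u_a` and `u_b` in the Móri graph `G^n_{m,β}`. -/
def mult (n m : ℕ) (f : ParentSeq (n * m)) (a b : ℕ) : ℕ :=
  ((Finset.Icc 2 (n * m)).filter (fun t =>
    (blk m t = a ∧ blk m (pval f t) = b) ∨ (blk m t = b ∧ blk m (pval f t) = a))).card

/-- The degree `d(u_i)` of the merged vertex `u_i` in the Móri graph `G^n_{m,β}`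
(a loop contributes `2`). -/
def degU (n m : ℕ) (f : ParentSeq (n * m)) (i : ℕ) : ℕ :=
  ((Finset.Icc 2 (n * m)).filter (fun t => blk m t = i)).card +
  ((Finset.Icc 2 (n * m)).filter (fun t => blk m (pval f t) = i)).card

/-!
Give the tree vertex `v_i` the weight `d(v_i) + β` and a block the sum of the weights of its
vertices, so that `v_{N+1}` attaches to a block with probability proportional to the weight of that
block, the total weight being `Z_N = (2 + β) N - 2`. If `v_{N+1}` belongs to a block of weight `B`,
the sum `Y` of the squared block weights satisfies

  `Z_N 𝔼 Y_{N+1} = (Z_N + 2) 𝔼 Y_N + 2 (1 + β) (Z_N + 1) 𝔼 B_N + ((1 + β)² + 1) Z_N`.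

Writing `s = N % m` for the number of vertices already present in the open block, one has
`𝔼 B_N = (1 + β) s + O(1 / N)`, since each of these vertices contributes its outgoing edge and `β`,
and the block is rarely hit otherwise. Hence the error in the approximation
`𝔼 Y_N ≈ c Z_N + (1 + β)² s (s - m)` is multiplied by `1 + 2 / Z_N` and shifted by `O(1 / N)` at
each step, and such errors grow like `∏ (1 + 2 / Z_j) = O(N ^ (2 / (2 + β)))`. When `N = n m` every
block has weight `d(u_i) + β m`, so `∑ binom(d(u_i), 2)` is an affine function of `Y`.
-/

section Growth

lemma mul_rpow_sub_one_le {α t : ℝ} (hα₀ : 0 ≤ α) (hα₁ : α ≤ 1) (ht : 1 ≤ t) :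
    t * (t - 1) ^ α ≤ (t - α) * t ^ α := by
  have ht₀ : 0 < t := by linarith
  have bernoulli : (1 + -t⁻¹) ^ α ≤ 1 + α * -t⁻¹ :=
    rpow_one_add_le_one_add_mul_self (neg_le_neg (inv_le_one_of_one_le₀ ht)) hα₀ hα₁
  have hbase : 0 ≤ 1 + -t⁻¹ := by linarith [inv_le_one_of_one_le₀ ht]
  calc t * (t - 1) ^ α = t * (t * (1 + -t⁻¹)) ^ α := by
        congr 2
        field_simp
        ring
    _ = t * t ^ α * (1 + -t⁻¹) ^ α := by rw [Real.mul_rpow ht₀.le hbase, mul_assoc]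
    _ ≤ t * t ^ α * (1 + α * -t⁻¹) := by gcongr
    _ = (t - α) * t ^ α := by
        field_simp
        ring

lemma le_mul_rpow_of_sub_mul_succ_le {α : ℝ} (hα₀ : 0 ≤ α) (hα₁ : α < 1) {x : ℕ → ℝ}
    (hx : 0 ≤ x 1) (h : ∀ n : ℕ, 1 ≤ n → (n - α) * x (n + 1) ≤ n * x n) {n : ℕ} (hn : 1 ≤ n) :
    x n ≤ x 1 / (1 - α) * (n : ℝ) ^ α := by
  have hα : 0 < 1 - α := by linarith
  have shifted : ∀ n : ℕ, 1 ≤ n → x (n + 1) ≤ x 1 / (1 - α) * (n : ℝ) ^ α := by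
    intro n hn
    induction n, hn using Nat.le_induction with
    | base =>
      have h₁ := h 1 le_rfl
      rw [Nat.cast_one, one_mul] at h₁
      rw [Nat.cast_one, Real.one_rpow, mul_one, le_div_iff₀ hα]
      linarith
    | succ n hn ih =>
      have hpos : (0 : ℝ) < (n + 1 : ℕ) - α := by
        push_cast
        linarith [(Nat.cast_nonneg n : (0 : ℝ) ≤ n)]
      have hpow : ((n + 1 : ℕ) : ℝ) * (n : ℝ) ^ α ≤ ((n + 1 : ℕ) - α) * ((n + 1 : ℕ) : ℝ) ^ α := by
        have := mul_rpow_sub_one_le hα₀ hα₁.le (t := (n + 1 : ℕ)) (mod_cast Nat.le_add_left 1 n)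
        rwa [show ((n + 1 : ℕ) : ℝ) - 1 = n by push_cast; ring] at this
      refine le_of_mul_le_mul_left ?_ hpos
      calc ((n + 1 : ℕ) - α) * x (n + 1 + 1) ≤ (n + 1 : ℕ) * x (n + 1) := h (n + 1) (by omega)
        _ ≤ (n + 1 : ℕ) * (x 1 / (1 - α) * (n : ℝ) ^ α) := by gcongr
        _ = x 1 / (1 - α) * ((n + 1 : ℕ) * (n : ℝ) ^ α) := by ring
        _ ≤ x 1 / (1 - α) * (((n + 1 : ℕ) - α) * ((n + 1 : ℕ) : ℝ) ^ α) := by gcongr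
        _ = ((n + 1 : ℕ) - α) * (x 1 / (1 - α) * ((n + 1 : ℕ) : ℝ) ^ α) := by ring
  obtain rfl | hn' := hn.eq_or_lt
  · rw [Nat.cast_one, Real.one_rpow, mul_one]
    exact le_div_self hx hα (by linarith)
  · obtain ⟨k, rfl⟩ : ∃ k, n = k + 1 := ⟨n - 1, by omega⟩
    refine (shifted k (by omega)).trans ?_
    gcongr
    exact k.le_succ

lemma le_mul_rpow_of_sub_mul_succ_le_add {α q : ℝ} (hα₀ : 0 < α) (hα₁ : α < 1) (hq : 0 ≤ q)
    {x : ℕ → ℝ} (hx : 0 ≤ x 1) (h : ∀ n : ℕ, 1 ≤ n → (n - α) * x (n + 1) ≤ n * x n + q)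
    {n : ℕ} (hn : 1 ≤ n) :
    x n ≤ (x 1 + q / α) / (1 - α) * (n : ℝ) ^ α := by
  have hqα : 0 ≤ q / α := by positivity
  -- Adding `q / α`, the fixed point of the inhomogeneous recursion, makes it homogeneous.
  have hom : ∀ n : ℕ, 1 ≤ n → (n - α) * (x (n + 1) + q / α) ≤ n * (x n + q / α) := by
    intro n hn
    have hαq : α * (q / α) = q := mul_div_cancel₀ q hα₀.ne'
    linarith [h n hn]
  linarith [le_mul_rpow_of_sub_mul_succ_le hα₀.le hα₁ (x := fun k => x k + q / α)
    (add_nonneg hx hqα) hom hn]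

end Growth

section Residues

lemma succ_mod_of_not_dvd {m N : ℕ} (h : ¬ m ∣ N + 1) : (N + 1) % m = N % m + 1 := by
  rcases Nat.eq_zero_or_pos m with rfl | _
  · simp only [Nat.mod_zero]
  · have h₁ := Nat.div_add_mod N m
    have h₂ := Nat.div_add_mod (N + 1) m
    rw [Nat.succ_div_of_not_dvd h] at h₂
    omega

lemma mod_add_one_of_dvd_succ {m N : ℕ} (h : m ∣ N + 1) : N % m + 1 = m := by
  have h₁ := Nat.div_add_mod N m
  have h₂ := Nat.div_mul_cancel h
  rw [Nat.succ_div_of_dvd h, add_mul, one_mul, mul_comm] at h₂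
  omega

lemma succ_mod_mul_sub (m N : ℕ) :
    (((N + 1) % m : ℕ) : ℝ) * (((N + 1) % m : ℕ) - m)
      = ((N % m : ℕ) : ℝ) * ((N % m : ℕ) - m) + 2 * (N % m : ℕ) + 1 - m := by
  by_cases h : m ∣ N + 1
  · have hs : ((N % m : ℕ) : ℝ) = m - 1 := by
      rw [eq_sub_iff_add_eq]
      exact_mod_cast mod_add_one_of_dvd_succ h
    rw [Nat.mod_eq_zero_of_dvd h, hs]
    push_cast
    ring
  · rw [succ_mod_of_not_dvd h]
    push_cast
    ring

lemma abs_le_of_reset {m : ℕ} (hm : 0 < m) {a b : ℝ} (ha : 1 ≤ a) (hb : 0 ≤ b) {y : ℕ → ℝ}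
    (reset : ∀ N, m ∣ N → y N = 0)
    (step : ∀ N, 1 ≤ N → ¬ m ∣ N + 1 → |y (N + 1)| ≤ a * |y N| + b) {N : ℕ} (hN : 1 ≤ N) :
    |y N| ≤ a ^ m * (|y 1| + m * b) := by
  have sharp : |y N| ≤ a ^ (N % m) * (|y 1| + (N % m : ℕ) * b) := by
    induction N, hN using Nat.le_induction with
    | base =>
      refine le_trans ?_ (le_mul_of_one_le_left (by positivity) (one_le_pow₀ ha))
      exact le_add_of_nonneg_right (by positivity)
    | succ N hN ih =>
      by_cases h : m ∣ N + 1
      · rw [reset _ h, abs_zero]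
        positivity
      · rw [succ_mod_of_not_dvd h]
        calc |y (N + 1)| ≤ a * |y N| + b := step N hN h
          _ ≤ a * (a ^ (N % m) * (|y 1| + (N % m : ℕ) * b)) + a ^ (N % m + 1) * b := by
            gcongr
            exact le_mul_of_one_le_left hb (one_le_pow₀ ha)
          _ = a ^ (N % m + 1) * (|y 1| + (N % m + 1 : ℕ) * b) := by
            push_cast
            ring
  have hlt : N % m ≤ m := (Nat.mod_lt N hm).le
  refine sharp.trans ?_
  gcongr

end Residues

section Blocks

lemma one_le_blk (m t : ℕ) : 1 ≤ blk m t := Nat.le_add_left 1 _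

lemma blk_mono (m : ℕ) : Monotone (blk m) := fun _ _ h =>
  Nat.add_le_add_right (Nat.div_le_div_right (Nat.sub_le_sub_right h 1)) 1

lemma blk_mem_Icc (m : ℕ) {t N : ℕ} (ht : t ∈ Icc 1 N) : blk m t ∈ Icc 1 N := by
  rw [mem_Icc] at ht ⊢
  have := Nat.div_le_self (t - 1) m
  exact ⟨one_le_blk m t, by unfold blk; omega⟩

lemma blk_mul {m n : ℕ} (hm : 0 < m) (hn : 1 ≤ n) : blk m (n * m) = n := by
  obtain ⟨k, rfl⟩ : ∃ k, n = k + 1 := ⟨n - 1, by omega⟩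
  rw [blk, Nat.add_right_cancel_iff, Nat.div_eq_iff hm, add_mul]
  omega

lemma blk_lt_blk_succ_of_dvd {m N i : ℕ} (h : m ∣ N) (hi : i ∈ Icc 1 N) :
    blk m i < blk m (N + 1) := by
  rw [mem_Icc] at hi
  exact Nat.add_lt_add_right (Nat.div_lt_div_of_lt_of_dvd h (by omega)) 1

lemma blk_add_two_of_not_dvd {m N : ℕ} (h : ¬ m ∣ N + 1) : blk m (N + 2) = blk m (N + 1) :=
  congrArg (· + 1) (Nat.succ_div_of_not_dvd h)

lemma card_filter_blk_eq {m n k : ℕ} (hm : 0 < m) (hk : k ∈ Icc 1 n) :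
    #{i ∈ Icc 1 (n * m) | blk m i = k} = m := by
  rw [mem_Icc] at hk
  obtain ⟨l, rfl⟩ : ∃ l, k = l + 1 := ⟨k - 1, by omega⟩
  have hle : (l + 1) * m ≤ n * m := Nat.mul_le_mul_right m hk.2
  have hIoc : {i ∈ Icc 1 (n * m) | blk m i = l + 1} = Ioc (l * m) ((l + 1) * m) := by
    ext i
    rw [mem_filter, mem_Icc, mem_Ioc, blk, Nat.add_right_cancel_iff, Nat.div_eq_iff hm]
    rw [add_mul] at hle ⊢
    omega
  rw [hIoc, Nat.card_Ioc, add_mul, one_mul, Nat.add_sub_cancel_left]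

end Blocks

namespace ParentSeq

variable {N : ℕ}

/-- The parent sequence of the tree on the first `N` vertices. -/
def restrict (g : ParentSeq (N + 1)) : ParentSeq N := fun t =>
  g ⟨t, t.2.1, t.2.2.trans N.le_succ⟩

/-- The parent sequence of the tree obtained by attaching the new vertex `v_{N+1}` to `v_i`. -/
def snoc (f : ParentSeq N) (i : Set.Icc 1 N) : ParentSeq (N + 1) := fun t =>
  if h : (t : ℕ) ≤ N then f ⟨t, t.2.1, h⟩
  else ⟨i, i.2.1, i.2.2.trans (Nat.le_sub_one_of_lt (not_le.mp h))⟩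

/-- A parent sequence of length `N + 1` amounts to one of length `N` and the parent of
`v_{N+1}`. -/
def snocEquiv (hN : 1 ≤ N) : ParentSeq N × Set.Icc 1 N ≃ ParentSeq (N + 1) where
  toFun p := p.1.snoc p.2
  invFun g := (g.restrict, g ⟨N + 1, Nat.succ_le_succ hN, le_rfl⟩)
  left_inv p := by
    refine Prod.ext (funext fun t => ?_) ?_
    · exact dif_pos t.2.2
    · exact dif_neg N.lt_irrefl
  right_inv g := by
    funext t
    by_cases h : (t : ℕ) ≤ N
    · exact dif_pos h
    · obtain ⟨t, ht⟩ := t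
      obtain rfl : t = N + 1 := le_antisymm ht.2 (not_le.mp h)
      exact dif_neg h

end ParentSeq

section Extension

variable {N : ℕ}

lemma pval_mem_Icc (f : ParentSeq N) {j : ℕ} (hj : j ∈ Icc 2 N) : pval f j ∈ Icc 1 (j - 1) := by
  rw [mem_Icc] at hj ⊢
  rw [pval, dif_pos hj]
  exact (f _).2

lemma pval_le (f : ParentSeq N) (j : ℕ) : pval f j ≤ N := by
  unfold pval
  split_ifs with h
  · exact (f ⟨j, h⟩).2.2.trans ((Nat.sub_le j 1).trans h.2)
  · exact N.zero_le

lemma pval_snoc_last (f : ParentSeq N) (i : Set.Icc 1 N) : pval (f.snoc i) (N + 1) = i := by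
  have hN : 1 ≤ N := i.2.1.trans i.2.2
  exact (dif_pos ⟨Nat.succ_le_succ hN, le_rfl⟩).trans (congrArg Subtype.val (dif_neg N.lt_irrefl))

lemma pval_snoc_of_le (f : ParentSeq N) (i : Set.Icc 1 N) {j : ℕ} (hj : j ≤ N) :
    pval (f.snoc i) j = pval f j := by
  unfold pval
  by_cases h : 2 ≤ j ∧ j ≤ N
  · rw [dif_pos h, dif_pos ⟨h.1, by omega⟩]
    exact congrArg Subtype.val (dif_pos hj)
  · rw [dif_neg h, dif_neg (by omega)]

lemma deg_snoc_of_le (f : ParentSeq N) (i : Set.Icc 1 N) {t : ℕ} (ht : t ≤ N) (k : ℕ) :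
    deg (f.snoc i) t k = deg f t k := by
  unfold deg
  congr 2
  refine filter_congr fun j hj => ?_
  rw [pval_snoc_of_le f i ((mem_Icc.mp hj).2.trans ht)]

-- For `k = N + 1` this holds because `deg f N (N + 1)` already counts the edge leaving `v_{N+1}`.
lemma deg_snoc_last (f : ParentSeq N) (i : Set.Icc 1 N) (k : ℕ) :
    deg (f.snoc i) (N + 1) k = deg f N k + if (i : ℕ) = k then 1 else 0 := by
  have hN : 1 ≤ N := i.2.1.trans i.2.2
  rw [deg, card_filter, sum_Icc_succ_top (by omega), pval_snoc_last, ← card_filter, add_right_comm]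
  exact congrArg (· + _) (deg_snoc_of_le f i le_rfl k)

lemma deg_succ_self (f : ParentSeq N) (hN : 1 ≤ N) : deg f N (N + 1) = 1 := by
  rw [deg, if_pos (by omega), filter_false_of_mem fun j _ => by have := pval_le f j; omega,
    card_empty]

end Extension

section Expectation

variable {N : ℕ} {β : ℝ}

/-- The normalising constant of the attachment probabilities of `v_{N+1}`: the sum over the `N`
vertices present of `degree + β`. -/
noncomputable def totalWeight (β : ℝ) (N : ℕ) : ℝ := (2 + β) * N - 2

lemma le_totalWeight (hβ : 0 < β) (hN : 1 ≤ N) : β ≤ totalWeight β N := by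
  have : (1 : ℝ) ≤ N := mod_cast hN
  unfold totalWeight
  nlinarith

lemma totalWeight_pos (hβ : 0 < β) (hN : 1 ≤ N) : 0 < totalWeight β N :=
  hβ.trans_le (le_totalWeight hβ hN)

lemma totalWeight_succ (β : ℝ) (N : ℕ) : totalWeight β (N + 1) = totalWeight β N + (2 + β) := by
  unfold totalWeight
  push_cast
  ring

lemma sum_deg (f : ParentSeq N) (t : ℕ) (s : Finset ℕ) :
    ∑ i ∈ s, deg f t i = #{j ∈ Icc 2 t | pval f j ∈ s} + #{i ∈ s | 2 ≤ i} := by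
  unfold deg
  rw [sum_add_distrib, sum_card_fiberwise_eq_card_filter, card_filter (fun i => 2 ≤ i)]

lemma sum_deg_add_eq_totalWeight (hN : 1 ≤ N) (β : ℝ) (f : ParentSeq N) :
    ∑ i ∈ Icc 1 N, ((deg f N i : ℝ) + β) = totalWeight β N := by
  have hparents : {j ∈ Icc 2 N | pval f j ∈ Icc 1 N} = Icc 2 N :=
    filter_true_of_mem fun j hj =>
      mem_Icc.mpr ⟨(mem_Icc.mp (pval_mem_Icc f hj)).1, pval_le f j⟩
  have hchildren : {i ∈ Icc 1 N | 2 ≤ i} = Icc 2 N := by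
    ext i
    simp only [mem_filter, mem_Icc]
    omega
  rw [sum_add_distrib, ← Nat.cast_sum, sum_deg, hparents, hchildren, sum_const, Nat.card_Icc,
    Nat.card_Icc, Nat.add_sub_cancel, nsmul_eq_mul, show N + 1 - 2 = N - 1 by omega, totalWeight]
  push_cast [Nat.cast_sub hN]
  ring

lemma moriP_snoc (β : ℝ) (f : ParentSeq N) (i : Set.Icc 1 N) :
    moriP β (f.snoc i) = moriP β f * ((deg f N i + β) / totalWeight β N) := by
  have hN : 1 ≤ N := i.2.1.trans i.2.2
  unfold moriP totalWeight
  rw [prod_Icc_succ_top (by omega), Nat.add_sub_cancel, pval_snoc_last, deg_snoc_of_le f i le_rfl,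
    Nat.cast_succ, add_sub_cancel_right]
  congr 1
  refine prod_congr rfl fun t ht => ?_
  rw [mem_Icc] at ht
  rw [pval_snoc_of_le f i ht.2, deg_snoc_of_le f i (by omega)]

lemma totalWeight_mul_moriE_succ (hβ : 0 < β) (hN : 1 ≤ N) {X : ParentSeq (N + 1) → ℝ}
    {φ : ParentSeq N → ℕ → ℝ} {ψ : ParentSeq N → ℝ}
    (hψ : ∀ f, ∑ i ∈ Icc 1 N, ((deg f N i : ℝ) + β) * φ f i = ψ f)
    (hX : ∀ f (i : Set.Icc 1 N), X (f.snoc i) = φ f i) :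
    totalWeight β N * moriE (N + 1) β X = moriE N β ψ := by
  have hZ : totalWeight β N ≠ 0 := (totalWeight_pos hβ hN).ne'
  unfold moriE
  rw [← (ParentSeq.snocEquiv hN).sum_comp, Fintype.sum_prod_type, mul_sum]
  refine sum_congr rfl fun f _ => ?_
  rw [← hψ, sum_subtype (Icc 1 N) (p := (· ∈ Set.Icc 1 N)) (fun i => mem_Icc), mul_sum, mul_sum]
  refine sum_congr rfl fun i _ => ?_
  change totalWeight β N * (moriP β (f.snoc i) * X (f.snoc i)) = _
  rw [moriP_snoc, hX]
  field_simp

lemma moriE_add (X Y : ParentSeq N → ℝ) :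
    moriE N β (fun f => X f + Y f) = moriE N β X + moriE N β Y := by
  simp only [moriE, mul_add, sum_add_distrib]

lemma moriE_const_mul (c : ℝ) (X : ParentSeq N → ℝ) :
    moriE N β (fun f => c * X f) = c * moriE N β X := by
  simp only [moriE, mul_sum, mul_left_comm]

lemma moriE_const (hβ : 0 < β) (hN : 1 ≤ N) (c : ℝ) : moriE N β (fun _ => c) = c := by
  induction N, hN using Nat.le_induction generalizing c with
  | base =>
    have : IsEmpty (Set.Icc 2 1) := ⟨fun t => absurd (t.2.1.trans t.2.2) (by norm_num)⟩
    have : Unique (ParentSeq 1) := Pi.uniqueOfIsEmpty _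
    rw [moriE, Fintype.sum_unique, moriP, Icc_eq_empty (by norm_num), prod_empty, one_mul]
  | succ N hN ih =>
    have average : ∀ f : ParentSeq N,
        ∑ i ∈ Icc 1 N, ((deg f N i : ℝ) + β) * c = totalWeight β N * c := fun f => by
      rw [← sum_mul, sum_deg_add_eq_totalWeight hN]
    refine mul_left_cancel₀ (totalWeight_pos hβ hN).ne' ?_
    rw [totalWeight_mul_moriE_succ hβ hN average fun _ _ => rfl, ih]

end Expectation

section BlockWeight

variable {N m : ℕ} {β : ℝ}

/-- The sum of `degree + β` over the tree vertices in the `k`-th block of length `m`; it is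
proportional to the probability that `v_{N+1}` attaches to that block. -/
noncomputable def blockWeight (m : ℕ) (β : ℝ) (f : ParentSeq N) (k : ℕ) : ℝ :=
  ∑ i ∈ Icc 1 N with blk m i = k, ((deg f N i : ℝ) + β)

/-- The weight of the block which the next vertex `v_{N+1}` belongs to. -/
noncomputable def openWeight (m : ℕ) (β : ℝ) (f : ParentSeq N) : ℝ :=
  blockWeight m β f (blk m (N + 1))

/-- The sum of the squared block weights, over all indices `k ≤ N`; those beyond the last block
contribute `0`. -/
noncomputable def sumSqBlockWeight (m : ℕ) (β : ℝ) (f : ParentSeq N) : ℝ :=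
  ∑ k ∈ Icc 1 N, blockWeight m β f k ^ 2

lemma sum_blockWeight_mul (f : ParentSeq N) {s : Finset ℕ} (hs : ∀ i ∈ Icc 1 N, blk m i ∈ s)
    (h : ℕ → ℝ) :
    ∑ k ∈ s, blockWeight m β f k * h k = ∑ i ∈ Icc 1 N, ((deg f N i : ℝ) + β) * h (blk m i) := by
  rw [← sum_fiberwise_of_maps_to hs]
  refine sum_congr rfl fun k _ => ?_
  rw [blockWeight, sum_mul]
  exact sum_congr rfl fun i hi => by rw [(mem_filter.mp hi).2]

lemma sum_blockWeight (hN : 1 ≤ N) (f : ParentSeq N) {s : Finset ℕ}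
    (hs : ∀ i ∈ Icc 1 N, blk m i ∈ s) : ∑ k ∈ s, blockWeight m β f k = totalWeight β N := by
  have := sum_blockWeight_mul (β := β) f hs fun _ => 1
  simpa only [mul_one, sum_deg_add_eq_totalWeight hN] using this

lemma sum_sq_blockWeight (f : ParentSeq N) {s : Finset ℕ} (hs : ∀ i ∈ Icc 1 N, blk m i ∈ s) :
    ∑ k ∈ s, blockWeight m β f k ^ 2 = sumSqBlockWeight m β f := by
  simp only [sumSqBlockWeight, sq, sum_blockWeight_mul f hs,
    sum_blockWeight_mul f fun _ => blk_mem_Icc m]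

lemma blockWeight_eq_zero (f : ParentSeq N) {k : ℕ} (hk : ∀ i ∈ Icc 1 N, blk m i ≠ k) :
    blockWeight m β f k = 0 := by
  rw [blockWeight, filter_false_of_mem hk, sum_empty]

lemma sum_deg_add_mul_ite (f : ParentSeq N) (k : ℕ) :
    ∑ i ∈ Icc 1 N, ((deg f N i : ℝ) + β) * (if blk m i = k then 1 else 0)
      = blockWeight m β f k := by
  simp only [mul_ite, mul_one, mul_zero, blockWeight, sum_filter]

lemma blockWeight_snoc (f : ParentSeq N) (i : Set.Icc 1 N) (k : ℕ) :
    blockWeight m β (f.snoc i) k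
      = blockWeight m β f k + (if blk m i = k then 1 else 0)
        + (1 + β) * (if blk m (N + 1) = k then 1 else 0) := by
  have hi : (i : ℕ) ∈ Icc 1 N := mem_Icc.mpr i.2
  have hN : 1 ≤ N := i.2.1.trans i.2.2
  have old : ∑ j ∈ Icc 1 N, ((deg (f.snoc i) (N + 1) j : ℝ) + β) * (if blk m j = k then 1 else 0)
      = blockWeight m β f k + (if blk m i = k then 1 else 0) := by
    have : ∀ j, ((deg (f.snoc i) (N + 1) j : ℝ) + β) * (if blk m j = k then 1 else 0)
        = (deg f N j + β) * (if blk m j = k then 1 else 0)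
          + if (i : ℕ) = j then (if blk m j = k then 1 else 0) else 0 := by
      intro j
      rw [deg_snoc_last]
      split_ifs <;> push_cast <;> ring
    simp only [this, sum_add_distrib, sum_deg_add_mul_ite, sum_ite_eq, if_pos hi]
  have new : (deg (f.snoc i) (N + 1) (N + 1) : ℝ) = 1 := by
    have : (i : ℕ) ≠ N + 1 := (Nat.lt_succ_of_le i.2.2).ne
    rw [deg_snoc_last, deg_succ_self f hN, if_neg this, add_zero, Nat.cast_one]
  rw [← sum_deg_add_mul_ite, sum_Icc_succ_top (by omega), old, new]

lemma openWeight_of_dvd (h : m ∣ N) (f : ParentSeq N) : openWeight m β f = 0 :=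
  blockWeight_eq_zero f fun _ hi => (blk_lt_blk_succ_of_dvd h hi).ne

lemma openWeight_snoc_of_not_dvd (h : ¬ m ∣ N + 1) (f : ParentSeq N) (i : Set.Icc 1 N) :
    openWeight m β (f.snoc i)
      = openWeight m β f + (1 + β) + if blk m i = blk m (N + 1) then 1 else 0 := by
  rw [openWeight, blk_add_two_of_not_dvd h, blockWeight_snoc, if_pos rfl, openWeight]
  ring

lemma sumSqBlockWeight_snoc (f : ParentSeq N) (i : Set.Icc 1 N) :
    sumSqBlockWeight m β (f.snoc i)
      = sumSqBlockWeight m β f + 2 * (1 + β) * openWeight m β f + ((1 + β) ^ 2 + 1)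
        + 2 * blockWeight m β f (blk m i)
        + 2 * (1 + β) * if blk m i = blk m (N + 1) then 1 else 0 := by
  have hsub := Icc_subset_Icc_right (a := 1) N.le_succ
  have hi : blk m i ∈ Icc 1 (N + 1) := hsub (blk_mem_Icc m (mem_Icc.mpr i.2))
  have hb : blk m (N + 1) ∈ Icc 1 (N + 1) := blk_mem_Icc m (by simp)
  have expand : ∀ k, blockWeight m β (f.snoc i) k ^ 2
      = blockWeight m β f k ^ 2
        + (if blk m i = k then 2 * blockWeight m β f k + 1 else 0)
        + (if blk m (N + 1) = k then 2 * (1 + β) * blockWeight m β f k + (1 + β) ^ 2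
            + 2 * (1 + β) * (if blk m i = k then 1 else 0) else 0) := by
    intro k
    rw [blockWeight_snoc]
    split_ifs <;> ring
  rw [sumSqBlockWeight, sum_congr rfl fun k _ => expand k, sum_add_distrib, sum_add_distrib,
    sum_ite_eq, sum_ite_eq, if_pos hi, if_pos hb,
    sum_sq_blockWeight f fun i hi => hsub (blk_mem_Icc m hi), openWeight]
  ring

end BlockWeight

section Recursions

variable {N m : ℕ} {β : ℝ}

lemma moriE_openWeight_of_dvd (β : ℝ) (h : m ∣ N) : moriE N β (openWeight m β) = 0 := by
  simp only [moriE, openWeight_of_dvd h, mul_zero, sum_const_zero]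

lemma totalWeight_mul_moriE_openWeight_succ (hβ : 0 < β) (hN : 1 ≤ N) (h : ¬ m ∣ N + 1) :
    totalWeight β N * moriE (N + 1) β (openWeight m β)
      = (totalWeight β N + 1) * moriE N β (openWeight m β) + (1 + β) * totalWeight β N := by
  have average : ∀ f : ParentSeq N,
      ∑ i ∈ Icc 1 N, ((deg f N i : ℝ) + β)
          * (openWeight m β f + (1 + β) + if blk m i = blk m (N + 1) then 1 else 0)
        = (totalWeight β N + 1) * openWeight m β f + (1 + β) * totalWeight β N := by
    intro f
    simp only [mul_add _ (_ + _) (ite _ _ _), sum_add_distrib, ← sum_mul,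
      sum_deg_add_eq_totalWeight hN, sum_deg_add_mul_ite, openWeight]
    ring
  rw [totalWeight_mul_moriE_succ hβ hN average (openWeight_snoc_of_not_dvd h), moriE_add,
    moriE_const_mul, moriE_const hβ hN]

lemma totalWeight_mul_moriE_sumSqBlockWeight_succ (hβ : 0 < β) (hN : 1 ≤ N) (m : ℕ) :
    totalWeight β N * moriE (N + 1) β (sumSqBlockWeight m β)
      = (totalWeight β N + 2) * moriE N β (sumSqBlockWeight m β)
        + 2 * (1 + β) * (totalWeight β N + 1) * moriE N β (openWeight m β)
        + ((1 + β) ^ 2 + 1) * totalWeight β N := by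
  have average : ∀ f : ParentSeq N,
      ∑ i ∈ Icc 1 N, ((deg f N i : ℝ) + β)
          * (sumSqBlockWeight m β f + 2 * (1 + β) * openWeight m β f + ((1 + β) ^ 2 + 1)
            + 2 * blockWeight m β f (blk m i)
            + 2 * (1 + β) * if blk m i = blk m (N + 1) then 1 else 0)
        = (totalWeight β N + 2) * sumSqBlockWeight m β f
          + 2 * (1 + β) * (totalWeight β N + 1) * openWeight m β f
          + ((1 + β) ^ 2 + 1) * totalWeight β N := by
    intro f
    have hsq : ∑ i ∈ Icc 1 N, ((deg f N i : ℝ) + β) * blockWeight m β f (blk m i)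
        = sumSqBlockWeight m β f := by
      simp only [sumSqBlockWeight, sq, sum_blockWeight_mul f fun _ => blk_mem_Icc m]
    calc _ = ∑ i ∈ Icc 1 N,
            (((deg f N i : ℝ) + β) * (sumSqBlockWeight m β f + 2 * (1 + β) * openWeight m β f
                + ((1 + β) ^ 2 + 1))
              + 2 * (((deg f N i : ℝ) + β) * blockWeight m β f (blk m i))
              + 2 * (1 + β)
                * (((deg f N i : ℝ) + β) * if blk m i = blk m (N + 1) then 1 else 0)) :=
          sum_congr rfl fun _ _ => by ring
      _ = _ := by
        simp only [sum_add_distrib, ← sum_mul, ← mul_sum, sum_deg_add_eq_totalWeight hN,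
          sum_deg_add_mul_ite, hsq, openWeight]
        ring
  rw [totalWeight_mul_moriE_succ hβ hN average sumSqBlockWeight_snoc, moriE_add, moriE_add,
    moriE_const_mul, moriE_const_mul, moriE_const hβ hN]

end Recursions

section Errors

variable {N m : ℕ} {β : ℝ}

/-- The error in the approximation of the expected weight of the open block by `(1 + β) s`, where
`s = N % m` is the number of vertices already present in it. -/
noncomputable def openWeightError (m : ℕ) (β : ℝ) (N : ℕ) : ℝ :=
  moriE N β (openWeight m β) - (1 + β) * (N % m : ℕ)

/-- The error in the approximation of the expected sum of squared block weights by
`c * totalWeight β N` plus a periodic function of `N`. The coefficient `c` satisfies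
`(2 + β) c = 2 c + (1 + β)² m + 1`, the balance of the mean growth per vertex when the number
`s = N % m` of vertices in the open block is averaged over its period. -/
noncomputable def sumSqError (m : ℕ) (β : ℝ) (N : ℕ) : ℝ :=
  moriE N β (sumSqBlockWeight m β) - ((1 + β) ^ 2 * m + 1) / β * totalWeight β N
    - (1 + β) ^ 2 * ((N % m : ℕ) * ((N % m : ℕ) - m))

lemma openWeightError_of_dvd (β : ℝ) (h : m ∣ N) : openWeightError m β N = 0 := by
  rw [openWeightError, moriE_openWeight_of_dvd β h, Nat.mod_eq_zero_of_dvd h, Nat.cast_zero,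
    mul_zero, sub_zero]

lemma totalWeight_mul_openWeightError_succ (hβ : 0 < β) (hN : 1 ≤ N) (h : ¬ m ∣ N + 1) :
    totalWeight β N * openWeightError m β (N + 1)
      = (totalWeight β N + 1) * openWeightError m β N + (1 + β) * (N % m : ℕ) := by
  rw [openWeightError, mul_sub, totalWeight_mul_moriE_openWeight_succ hβ hN h,
    succ_mod_of_not_dvd h, openWeightError]
  push_cast
  ring

lemma totalWeight_mul_sumSqError_succ (hβ : 0 < β) (hN : 1 ≤ N) (m : ℕ) :
    totalWeight β N * sumSqError m β (N + 1)
      = (totalWeight β N + 2) * sumSqError m β N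
        + (2 * (1 + β) ^ 2 * ((N % m : ℕ) * ((N % m : ℕ) - m))
          + 2 * (1 + β) * (totalWeight β N * openWeightError m β N + openWeightError m β N
            + (1 + β) * (N % m : ℕ))) := by
  rw [sumSqError, mul_sub, mul_sub, totalWeight_mul_moriE_sumSqBlockWeight_succ hβ hN,
    succ_mod_mul_sub, totalWeight_succ, sumSqError, openWeightError]
  field_simp
  ring

lemma totalWeight_succ_le (hβ : 0 < β) (hN : 1 ≤ N) :
    totalWeight β (N + 1) ≤ (1 + (2 + β) / β) * totalWeight β N := by
  have : 2 + β ≤ (2 + β) / β * totalWeight β N := by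
    rw [div_mul_eq_mul_div, le_div_iff₀ hβ]
    gcongr
    exact le_totalWeight hβ hN
  rw [totalWeight_succ]
  linarith

lemma abs_totalWeight_mul_openWeightError_succ_le (hβ : 0 < β) (hm : 0 < m) (hN : 1 ≤ N)
    (h : ¬ m ∣ N + 1) :
    |totalWeight β (N + 1) * openWeightError m β (N + 1)|
      ≤ (1 + (2 + β) / β)
        * ((1 + 1 / β) * |totalWeight β N * openWeightError m β N| + (1 + β) * m) := by
  set Z := totalWeight β N
  set e := openWeightError m β N
  set s : ℝ := ((N % m : ℕ) : ℝ)
  have hZβ : β ≤ Z := le_totalWeight hβ hN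
  have hZ : 0 < Z := hβ.trans_le hZβ
  have hs : s ≤ m := Nat.cast_le.mpr (Nat.mod_lt N hm).le
  have hes : 0 ≤ (1 + β) * s := mul_nonneg (by positivity) (Nat.cast_nonneg _)
  have recursion : Z * openWeightError m β (N + 1) = (1 + 1 / Z) * (Z * e) + (1 + β) * s := by
    rw [totalWeight_mul_openWeightError_succ hβ hN h, ← mul_assoc, one_add_div hZ.ne',
      div_mul_cancel₀ _ hZ.ne']
  calc |totalWeight β (N + 1) * openWeightError m β (N + 1)|
      = totalWeight β (N + 1) * |openWeightError m β (N + 1)| := by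
        rw [abs_mul, abs_of_pos (totalWeight_pos hβ (by omega))]
    _ ≤ (1 + (2 + β) / β) * Z * |openWeightError m β (N + 1)| := by
        gcongr
        exact totalWeight_succ_le hβ hN
    _ = (1 + (2 + β) / β) * |(1 + 1 / Z) * (Z * e) + (1 + β) * s| := by
        rw [← recursion, abs_mul, abs_of_pos hZ, mul_assoc]
    _ ≤ (1 + (2 + β) / β) * ((1 + 1 / Z) * |Z * e| + (1 + β) * s) := by
        gcongr
        refine (abs_add_le _ _).trans_eq ?_
        rw [abs_mul, abs_of_pos (by positivity), abs_of_nonneg hes]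
    _ ≤ (1 + (2 + β) / β) * ((1 + 1 / β) * |Z * e| + (1 + β) * m) := by gcongr

lemma exists_abs_totalWeight_mul_openWeightError_le (hβ : 0 < β) (hm : 0 < m) :
    ∃ C, ∀ N, 1 ≤ N → |totalWeight β N * openWeightError m β N| ≤ C := by
  have reset : ∀ N, m ∣ N → totalWeight β N * openWeightError m β N = 0 := fun N h => by
    rw [openWeightError_of_dvd β h, mul_zero]
  have factor : 1 ≤ (1 + (2 + β) / β) * (1 + 1 / β) := one_le_mul_of_one_le_of_one_le
    (le_add_of_nonneg_right (by positivity)) (le_add_of_nonneg_right (by positivity))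
  have shift : 0 ≤ (1 + (2 + β) / β) * ((1 + β) * m) := by positivity
  refine ⟨_, fun N hN => abs_le_of_reset hm factor shift reset (fun N hN h => ?_) hN⟩
  rw [mul_assoc, ← mul_add]
  exact abs_totalWeight_mul_openWeightError_succ_le hβ hm hN h

lemma exists_totalWeight_mul_abs_sumSqError_succ_le (hβ : 0 < β) (hm : 0 < m) :
    ∃ Q, 0 ≤ Q ∧ ∀ N, 1 ≤ N →
      totalWeight β N * |sumSqError m β (N + 1)|
        ≤ (totalWeight β N + 2) * |sumSqError m β N| + Q := by
  obtain ⟨C, hC⟩ := exists_abs_totalWeight_mul_openWeightError_le hβ hm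
  have hC₀ : 0 ≤ C := (abs_nonneg _).trans (hC 1 le_rfl)
  refine ⟨2 * (1 + β) ^ 2 * (m * m) + 2 * (1 + β) * (C + C / β + (1 + β) * m), by positivity,
    fun N hN => ?_⟩
  set Z := totalWeight β N
  set e := openWeightError m β N
  set s : ℝ := ((N % m : ℕ) : ℝ)
  have hZ : 0 < Z := totalWeight_pos hβ hN
  have hs₀ : 0 ≤ s := Nat.cast_nonneg _
  have hs : s ≤ m := Nat.cast_le.mpr (Nat.mod_lt N hm).le
  have periodic : |s * (s - m)| ≤ m * m := by
    rw [abs_mul, abs_of_nonneg hs₀, abs_of_nonpos (sub_nonpos.mpr hs)]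
    exact mul_le_mul hs (by linarith) (by linarith) m.cast_nonneg
  have he : |e| ≤ C / β := by
    rw [le_div_iff₀' hβ]
    calc β * |e| ≤ Z * |e| := by gcongr; exact le_totalWeight hβ hN
      _ = |Z * e| := by rw [abs_mul, abs_of_pos hZ]
      _ ≤ C := hC N hN
  calc Z * |sumSqError m β (N + 1)| = |Z * sumSqError m β (N + 1)| := by
        rw [abs_mul, abs_of_pos hZ]
    _ = |(Z + 2) * sumSqError m β N + (2 * (1 + β) ^ 2 * (s * (s - m))
          + 2 * (1 + β) * (Z * e + e + (1 + β) * s))| := by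
        rw [totalWeight_mul_sumSqError_succ hβ hN]
    _ ≤ (Z + 2) * |sumSqError m β N| + (2 * (1 + β) ^ 2 * |s * (s - m)|
          + 2 * (1 + β) * (|Z * e| + |e| + (1 + β) * s)) := by
        refine (abs_add_le _ _).trans (add_le_add ?_ ((abs_add_le _ _).trans (add_le_add ?_ ?_)))
        · rw [abs_mul, abs_of_pos (by positivity)]
        · rw [abs_mul, abs_of_pos (by positivity)]
        · rw [abs_mul, abs_of_pos (by positivity)]
          gcongr
          refine (abs_add_le _ _).trans (add_le_add (abs_add_le _ _) ?_)
          rw [abs_of_nonneg (by positivity)]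
    _ ≤ _ := by
        gcongr
        exact hC N hN

lemma exists_abs_sumSqError_le (hβ : 0 < β) (hm : 0 < m) :
    ∃ K, 0 ≤ K ∧ ∀ N : ℕ, 1 ≤ N → |sumSqError m β N| ≤ K * (N : ℝ) ^ (2 / (2 + β)) := by
  obtain ⟨Q, hQ, bound⟩ := exists_totalWeight_mul_abs_sumSqError_succ_le hβ hm
  have hβ₂ : 0 < 2 + β := by linarith
  have hα₁ : 2 / (2 + β) < 1 := by
    rw [div_lt_one hβ₂]
    linarith
  have scaled : ∀ n : ℕ, 1 ≤ n → ((n : ℝ) - 2 / (2 + β)) * |sumSqError m β (n + 1)|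
      ≤ n * |sumSqError m β n| + Q / (2 + β) := by
    intro n hn
    refine le_of_mul_le_mul_left ?_ hβ₂
    calc _ = totalWeight β n * |sumSqError m β (n + 1)| := by
          rw [totalWeight]
          field_simp
      _ ≤ (totalWeight β n + 2) * |sumSqError m β n| + Q := bound n hn
      _ = _ := by
          rw [totalWeight]
          field_simp
          ring
  have : 0 < 1 - 2 / (2 + β) := sub_pos.mpr hα₁
  refine ⟨(|sumSqError m β 1| + Q / (2 + β) / (2 / (2 + β))) / (1 - 2 / (2 + β)), by positivity,
    fun N hN => ?_⟩
  exact le_mul_rpow_of_sub_mul_succ_le_add (x := fun N => |sumSqError m β N|) (by positivity) hα₁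
    (by positivity) (abs_nonneg _) scaled hN

end Errors

section MergedDegrees

variable {n m : ℕ} {β : ℝ}

lemma degU_eq_sum_deg (f : ParentSeq (n * m)) (k : ℕ) :
    degU n m f k = ∑ i ∈ Icc 1 (n * m) with blk m i = k, deg f (n * m) i := by
  rw [sum_deg, degU, add_comm, filter_filter]
  congr 2
  · refine filter_congr fun j hj => ?_
    have := mem_Icc.mpr ⟨(mem_Icc.mp (pval_mem_Icc f hj)).1, pval_le f j⟩
    rw [mem_filter, and_iff_right this]
  · ext i
    simp only [mem_filter, mem_Icc]
    omega

lemma blockWeight_eq_degU_add (hm : 0 < m) (β : ℝ) (f : ParentSeq (n * m)) {k : ℕ}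
    (hk : k ∈ Icc 1 n) : blockWeight m β f k = degU n m f k + β * m := by
  rw [blockWeight, sum_add_distrib, sum_const, card_filter_blk_eq hm hk, degU_eq_sum_deg,
    Nat.cast_sum, nsmul_eq_mul, mul_comm β]

lemma sum_choose_degU (hm : 0 < m) (hn : 1 ≤ n) (β : ℝ) (f : ParentSeq (n * m)) :
    ∑ k ∈ Icc 1 n, (Nat.choose (degU n m f k) 2 : ℝ)
      = 1 / 2 * sumSqBlockWeight m β f
        + (-(β * m + 1 / 2) * totalWeight β (n * m) + (β * m + 1) * (β * m) / 2 * n) := by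
  have blocks : ∀ i ∈ Icc 1 (n * m), blk m i ∈ Icc 1 n := fun i hi =>
    mem_Icc.mpr ⟨one_le_blk m i, (blk_mono m (mem_Icc.mp hi).2).trans_eq (blk_mul hm hn)⟩
  have expand : ∀ k ∈ Icc 1 n, (Nat.choose (degU n m f k) 2 : ℝ)
      = 1 / 2 * blockWeight m β f k ^ 2
        + (-(β * m + 1 / 2) * blockWeight m β f k + (β * m + 1) * (β * m) / 2) := by
    intro k hk
    rw [blockWeight_eq_degU_add hm β f hk, Nat.cast_choose_two]
    ring
  rw [sum_congr rfl expand, sum_add_distrib, sum_add_distrib, ← mul_sum, ← mul_sum,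
    sum_sq_blockWeight f blocks, sum_blockWeight (Nat.mul_pos hn hm) f blocks, sum_const,
    Nat.card_Icc, Nat.add_sub_cancel, nsmul_eq_mul, mul_comm (n : ℝ)]

lemma moriE_sum_choose_degU (hβ : 0 < β) (hm : 0 < m) (hn : 1 ≤ n) :
    moriE (n * m) β (fun f => ∑ k ∈ Icc 1 n, (Nat.choose (degU n m f k) 2 : ℝ))
      = ((2 + 5 * β) / (2 * β) * (m : ℝ) ^ 2 + (2 - β) / (2 * β) * m) * n
        + (1 / 2 * sumSqError m β (n * m) + (2 * β * m + 1 - ((1 + β) ^ 2 * m + 1) / β)) := by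
  simp only [sum_choose_degU hm hn β]
  rw [moriE_add, moriE_const_mul, moriE_const hβ (Nat.mul_pos hn hm), sumSqError, Nat.mul_mod_left,
    totalWeight]
  push_cast
  field_simp
  ring

end MergedDegrees

/-- **Proposition 4.2.** The expectation of `Σ_{i} binom(d(u_i),2)` in `G^n_{m,β}` is
`((2+5β)/(2β)·m² + (2−β)/(2β)·m)·n + O(n^{2/(2+β)})`. -/
theorem expected_sum_binom_degrees (β : ℝ) (hβ : 0 < β) (m : ℕ) (hm : 1 ≤ m) :
    ∃ K : ℝ, 0 < K ∧ ∀ n : ℕ, 1 ≤ n →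
      |moriE (n * m) β (fun f => ∑ i ∈ Finset.Icc 1 n, (Nat.choose (degU n m f i) 2 : ℝ))
        - ((2 + 5 * β) / (2 * β) * (m : ℝ) ^ 2 + (2 - β) / (2 * β) * (m : ℝ)) * (n : ℝ)|
        ≤ K * (n : ℝ) ^ (2 / (2 + β)) := by
  obtain ⟨K, hK, bound⟩ := exists_abs_sumSqError_le hβ hm
  set c : ℝ := 2 * β * m + 1 - ((1 + β) ^ 2 * m + 1) / β
  set α : ℝ := 2 / (2 + β)
  refine ⟨1 / 2 * (K * (m : ℝ) ^ α) + |c| + 1, by positivity, fun n hn => ?_⟩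
  have one_le : 1 ≤ (n : ℝ) ^ α := Real.one_le_rpow (mod_cast hn) (by positivity)
  rw [moriE_sum_choose_degU hβ hm hn, add_sub_cancel_left]
  calc |1 / 2 * sumSqError m β (n * m) + c| ≤ 1 / 2 * |sumSqError m β (n * m)| + |c| := by
        refine (abs_add_le _ _).trans_eq ?_
        rw [abs_mul, abs_of_pos one_half_pos]
    _ ≤ 1 / 2 * (K * ((n * m : ℕ) : ℝ) ^ α) + |c| := by
        gcongr
        exact bound (n * m) (Nat.mul_pos hn hm)
    _ = 1 / 2 * (K * (m : ℝ) ^ α) * (n : ℝ) ^ α + |c| := by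
        rw [Nat.cast_mul, Real.mul_rpow n.cast_nonneg m.cast_nonneg]
        ring
    _ ≤ (1 / 2 * (K * (m : ℝ) ^ α) + |c| + 1) * (n : ℝ) ^ α := by
        linarith [mul_le_mul_of_nonneg_left one_le (abs_nonneg c)]
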